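/- arXiv:1302.5988 — 4 statements merged into one kernel-verified Lean document; each statement's English description precedes it below -/
import Mathlib

section
/- Let (x_n, f_n) be a Schauder frame for a Banach space E and let z₀ ∈ E. If there exists a nonzero functional φ ∈ E* such that φ(x_n + z₀) = 0 for all n ∈ ℕ, then there exists a functional Φ ∈ E* such that Φ(x_n) = 1 for all n ∈ ℕ (namely Φ = −φ/φ(z₀), after showing φ(z₀) ≠ 0). -/
open Filter Finset

/-- `(x, f)` is a Schauder frame for `E`: for every `v ∈ E` the series
`∑ₙ f n v • x n` converges in norm to `v`. -/
def IsSchauderFrame {E : Type*} [NormedAddCommGroup E] [NormedSpace ℝ E]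
    (x : ℕ → E) (f : ℕ → E →L[ℝ] ℝ) : Prop :=
  ∀ v : E, Tendsto (fun N : ℕ => ∑ n ∈ Finset.range N, f n v • x n) atTop (nhds v)

/-!
A nonzero continuous functional cannot vanish on all the `x n`, since these span a dense subspace.
As `φ (x n) = -φ z₀` for every `n`, this forces `φ z₀ ≠ 0`, and `-φ / φ z₀` takes the value `1` at
each `x n`.
-/

theorem IsSchauderFrame.dense_span_range {E : Type*} [NormedAddCommGroup E] [NormedSpace ℝ E]
    {x : ℕ → E} {f : ℕ → E →L[ℝ] ℝ} (hframe : IsSchauderFrame x f) :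
    Dense (Submodule.span ℝ (Set.range x) : Set E) := fun v =>
  mem_closure_of_tendsto (hframe v) <| Eventually.of_forall fun _ =>
    Submodule.sum_mem _ fun n _ =>
      Submodule.smul_mem _ _ <| Submodule.subset_span <| Set.mem_range_self n

theorem map_ne_zero_of_dense_span_of_map_add_eq_zero {R M N ι : Type*} [Semiring R]
    [AddCommMonoid M] [TopologicalSpace M] [Module R M]
    [AddCommMonoid N] [TopologicalSpace N] [T2Space N] [Module R N]
    {x : ι → M} (hx : Dense (Submodule.span R (Set.range x) : Set M))
    {z : M} {φ : M →L[R] N} (hφ : φ ≠ 0) (hann : ∀ i, φ (x i + z) = 0) :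
    φ z ≠ 0 := by
  intro hz
  have hφx : Set.EqOn φ (0 : M →L[R] N) (Set.range x) := by
    rintro _ ⟨i, rfl⟩
    simpa [hz] using hann i
  exact hφ (ContinuousLinearMap.ext_on hx hφx)

theorem stmt_2_general {𝕜 E ι : Type*} [Field 𝕜] [TopologicalSpace 𝕜] [T2Space 𝕜]
    [ContinuousConstSMul 𝕜 𝕜] [AddCommGroup E] [TopologicalSpace E] [Module 𝕜 E]
    {x : ι → E} (hx : Dense (Submodule.span 𝕜 (Set.range x) : Set E))
    {z₀ : E} {φ : E →L[𝕜] 𝕜} (hφ : φ ≠ 0) (hann : ∀ i, φ (x i + z₀) = 0) :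
    ∃ Φ : E →L[𝕜] 𝕜, ∀ i, Φ (x i) = 1 := by
  have hz₀ : φ z₀ ≠ 0 := map_ne_zero_of_dense_span_of_map_add_eq_zero hx hφ hann
  refine ⟨-(φ z₀)⁻¹ • φ, fun i => ?_⟩
  have hφx : φ (x i) = -φ z₀ := eq_neg_of_add_eq_zero_left (by rw [← map_add, hann i])
  simp [hφx, hz₀]

/-- **Theorem 2.1.** Let `(x, f)` be a Schauder frame for a Banach space `E` and
`z₀ ∈ E`. If there is a nonzero functional `φ ∈ E*` with `φ (x n + z₀) = 0` for all
`n`, then there exists `Φ ∈ E*` with `Φ (x n) = 1` for all `n`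
(namely `Φ = -φ / φ z₀`, after showing `φ z₀ ≠ 0`). -/
theorem stmt_2 (E : Type*) [NormedAddCommGroup E] [NormedSpace ℝ E] [CompleteSpace E]
    (x : ℕ → E) (f : ℕ → E →L[ℝ] ℝ) (hframe : IsSchauderFrame x f)
    (z₀ : E) (φ : E →L[ℝ] ℝ) (hφ : φ ≠ 0) (hann : ∀ n : ℕ, φ (x n + z₀) = 0) :
    ∃ Φ : E →L[ℝ] ℝ, ∀ n : ℕ, Φ (x n) = 1 :=
  stmt_2_general hframe.dense_span_range hφ hann
end

section
/- In E = ℓ¹(ℕ), let x₁ = x₂ = (1/2)e₁ and x_n = e_{n−1} for n ≥ 3, and let z₀ = −e₁. Then the family {x_n + z₀}_{n∈ℕ} is total over (ℓ¹)*: every continuous linear functional f on ℓ¹ satisfying f(x_n + z₀) = 0 for all n ∈ ℕ is the zero functional. -/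
/-- The canonical `n`-th unit vector of `ℓ¹(ℕ)`. -/
noncomputable def e (n : ℕ) : lp (fun _ : ℕ => ℝ) 1 := lp.single 1 n (1 : ℝ)

theorem map_eq_zero_of_map_smul_sub_self {R M N F : Type*} [Ring R] [IsDomain R]
    [AddCommGroup M] [Module R M] [AddCommGroup N] [Module R N] [Module.IsTorsionFree R N]
    [FunLike F M N] [LinearMapClass F R M N] {f : F} {c : R} (hc : c ≠ 1) {v : M}
    (h : f (c • v - v) = 0) : f v = 0 := by
  have hsmul : (c - 1) • f v = 0 := by
    rwa [← map_smul, sub_smul, one_smul]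
  exact (smul_eq_zero.mp hsmul).resolve_left (sub_ne_zero.mpr hc)

section lp

open scoped ENNReal

variable {ι 𝕜 F : Type*} [DecidableEq ι] {p : ℝ≥0∞} [Fact (1 ≤ p)] [TopologicalSpace F] [T2Space F]

theorem continuousLinearMap_ext_lp_single_one [NormedRing 𝕜] [AddCommMonoid F] [Module 𝕜 F]
    (hp : p ≠ ∞) {f g : lp (fun _ : ι => 𝕜) p →L[𝕜] F}
    (h : ∀ i, f (lp.single p i 1) = g (lp.single p i 1)) : f = g :=
  lp.ext_continuousLinearMap hp fun i => ContinuousLinearMap.ext_ring (h i)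

theorem stmt_9_general [NormedRing 𝕜] [IsDomain 𝕜] [AddCommGroup F] [Module 𝕜 F]
    [Module.IsTorsionFree 𝕜 F] (hp : p ≠ ∞) {κ : Type*} {x : κ → lp (fun _ : ι => 𝕜) p}
    {i₀ : ι} {c : 𝕜} (hc : c ≠ 1)
    (hx₀ : c • lp.single p i₀ 1 ∈ Set.range x)
    (hx : ∀ i ≠ i₀, lp.single p i 1 ∈ Set.range x)
    (f : lp (fun _ : ι => 𝕜) p →L[𝕜] F) (hf : ∀ k, f (x k - lp.single p i₀ 1) = 0) :
    f = 0 := by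
  have hf₀ : f (lp.single p i₀ 1) = 0 := by
    obtain ⟨k, hk⟩ := hx₀
    exact map_eq_zero_of_map_smul_sub_self hc (hk ▸ hf k)
  refine continuousLinearMap_ext_lp_single_one hp fun i => ?_
  obtain rfl | hi := eq_or_ne i i₀
  · exact hf₀
  · obtain ⟨k, hk⟩ := hx i hi
    rw [← hk, zero_apply, ← hf k, map_sub, hf₀, sub_zero]

end lp

/-- **Remark 2.2.** In `E = ℓ¹(ℕ)` (indexed from `0`), let `x 0 = x 1 = (1/2) e 0`,
`x (n+2) = e (n+1)`, and let `z₀ = -e 0`.  Then the family `{x n + z₀}` is total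
over `(ℓ¹)*`: every continuous linear functional `f` on `ℓ¹` with
`f (x n + z₀) = 0` for all `n` is the zero functional. -/
theorem stmt_9 (x : ℕ → lp (fun _ : ℕ => ℝ) 1)
    (hx0 : x 0 = (1 / 2 : ℝ) • e 0) (hx1 : x 1 = (1 / 2 : ℝ) • e 0)
    (hx : ∀ n : ℕ, x (n + 2) = e (n + 1)) (z₀ : lp (fun _ : ℕ => ℝ) 1)
    (hz₀ : z₀ = -e 0) :
    ∀ f : lp (fun _ : ℕ => ℝ) 1 →L[ℝ] ℝ, (∀ n : ℕ, f (x n + z₀) = 0) → f = 0 := by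
  have hx_ne : ∀ i ≠ 0, e i ∈ Set.range x := Nat.rec (absurd rfl) fun n _ _ => ⟨n + 2, hx n⟩
  simpa only [hz₀, sub_eq_add_neg] using!
    stmt_9_general ENNReal.one_ne_top (by norm_num) ⟨0, hx0⟩ hx_ne
end

section
/- In E = ℓ¹(ℕ), let x₁ = x₂ = (1/2)e₁ and x_n = e_{n−1} for n ≥ 3. Then the subfamily {x_n}_{n≥2} obtained by deleting x₁ is still total over (ℓ¹)*: every continuous linear functional f on ℓ¹ with f(x_n) = 0 for all n ≥ 2 is the zero functional. Hence the retro Banach frame associated with {x_n} is not exact, and in particular is not of type P. -/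
section Total

variable {R E ι κ : Type*} [Semiring R] [TopologicalSpace R] [AddCommMonoid E] [Module R E]
  [TopologicalSpace E]

variable (R) in
/-- A family `x` in `E` is total over the dual `E*` if no nonzero continuous linear functional
on `E` vanishes at every member of `x`. -/
def IsTotalFamily (x : ι → E) : Prop :=
  ∀ f : E →L[R] R, (∀ i, f (x i) = 0) → f = 0

theorem IsTotalFamily.of_forall_mem_span {x : ι → E} {y : κ → E} (hy : IsTotalFamily R y)
    (hyx : ∀ k, y k ∈ Submodule.span R (Set.range x)) : IsTotalFamily R x := by
  intro f hf
  have span_le_ker : Submodule.span R (Set.range x) ≤ LinearMap.ker f.toLinearMap :=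
    Submodule.span_le.2 (Set.range_subset_iff.2 hf)
  exact hy f fun k => span_le_ker (hyx k)

end Total

section UnitVectors

open scoped ENNReal

variable {𝕜 ι : Type*} {p : ℝ≥0∞} [Fact (1 ≤ p)]

theorem isTotalFamily_lp_single_one [NormedRing 𝕜] [DecidableEq ι] (hp : p ≠ ∞) :
    IsTotalFamily 𝕜 fun i : ι => (lp.single p i 1 : lp (fun _ : ι => 𝕜) p) := by
  intro f hf
  refine lp.ext_continuousLinearMap hp fun i => ?_
  ext
  simpa using hf i

theorem stmt_10_general [NormedField 𝕜] (hp : p ≠ ∞) {x : ℕ → lp (fun _ : ℕ => 𝕜) p} {a : 𝕜}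
    (ha : a ≠ 0) (hx1 : x 1 = a • lp.single p 0 1)
    (hx : ∀ n, x (n + 2) = lp.single p (n + 1) 1) :
    IsTotalFamily 𝕜 fun n : Set.Ici 1 => x n := by
  refine (isTotalFamily_lp_single_one hp).of_forall_mem_span fun n => ?_
  have mem_span (m : Set.Ici 1) :
      x m ∈ Submodule.span 𝕜 (Set.range fun n : Set.Ici 1 => x n) :=
    Submodule.subset_span ⟨m, rfl⟩
  cases n with
  | zero => exact (Submodule.smul_mem_iff _ ha).1 (hx1 ▸ mem_span ⟨1, Set.self_mem_Ici⟩)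
  | succ n => exact hx n ▸ mem_span ⟨n + 2, Nat.le_add_left 1 (n + 1)⟩

end UnitVectors

/-- **Remark 3.1.** In `E = ℓ¹(ℕ)` (indexed from `0`), let `x 0 = x 1 = (1/2) e 0`
and `x (n+2) = e (n+1)`.  Then the proper subfamily `{x n}_{n ≥ 1}` obtained by
deleting `x 0` is still total over `(ℓ¹)*`: every continuous linear functional `f`
on `ℓ¹` with `f (x n) = 0` for all `n ≥ 1` is the zero functional.  (Hence, by
Lemma 1.1, the retro Banach frame associated with `{x n}` is not exact, and in
particular is not of type `P`.) -/
theorem stmt_10 (x : ℕ → lp (fun _ : ℕ => ℝ) 1)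
    (hx0 : x 0 = (1 / 2 : ℝ) • e 0) (hx1 : x 1 = (1 / 2 : ℝ) • e 0)
    (hx : ∀ n : ℕ, x (n + 2) = e (n + 1)) :
    ∀ f : lp (fun _ : ℕ => ℝ) 1 →L[ℝ] ℝ, (∀ n : ℕ, 1 ≤ n → f (x n) = 0) → f = 0 := by
  intro f hf
  exact stmt_10_general ENNReal.one_ne_top one_half_pos.ne' hx1 hx f fun n => hf n n.2
end

section
/- In E = ℓ¹(ℕ), the family {n·e_n}_{n∈ℕ} is total over (ℓ¹)* (every f ∈ (ℓ¹)* with f(n·e_n) = 0 for all n is zero), the functional Ψ ∈ (ℓ¹)* given by the bounded sequence (1/n)_{n∈ℕ} ∈ ℓ∞ satisfies Ψ(n·e_n) = 1 for every n ∈ ℕ, and for every k ∈ ℕ there exists a nonzero f ∈ (ℓ¹)* (the k-th coordinate functional) with f(n·e_n) = 0 for all n ≠ k, so removing any element of the family destroys totality. -/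
open scoped ENNReal lp

section UnitVectors

variable {ι 𝕜 : Type*} [DecidableEq ι] [NormedField 𝕜] {p : ℝ≥0∞} [Fact (1 ≤ p)]

-- Since `p ≠ ∞`, every element of `ℓᵖ` is the norm limit of its finite truncations.
lemma eq_zero_of_map_smul_single_eq_zero {F : Type*} [AddCommMonoid F] [Module 𝕜 F]
    [TopologicalSpace F] [T2Space F] (hp : p ≠ ∞) {c : ι → 𝕜} (hc : ∀ i, c i ≠ 0)
    {f : ℓ^p(ι, 𝕜) →L[𝕜] F} (hf : ∀ i, f (c i • lp.single p i 1) = 0) : f = 0 := by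
  have map_single_one (i : ι) : f (lp.single p i 1) = 0 := by
    rw [← inv_smul_smul₀ (hc i) (lp.single p i 1), map_smul, hf i, smul_zero]
  exact lp.ext_continuousLinearMap hp fun i ↦ ContinuousLinearMap.ext_ring (map_single_one i)

end UnitVectors

section Eval

variable {ι 𝕜 : Type*} {E : ι → Type*} [NormedRing 𝕜]
  [∀ i, NormedAddCommGroup (E i)] [∀ i, Module 𝕜 (E i)] [∀ i, IsBoundedSMul 𝕜 (E i)]
  {p : ℝ≥0∞} [Fact (1 ≤ p)]

lemma evalCLM_single [DecidableEq ι] (k i : ι) (a : E i) :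
    lp.evalCLM 𝕜 E p k (lp.single p i a) = Pi.single i a k :=
  rfl

lemma evalCLM_ne_zero (k : ι) [Nontrivial (E k)] : lp.evalCLM 𝕜 E p k ≠ 0 := by
  classical
  obtain ⟨a, ha⟩ := exists_ne (0 : E k)
  refine fun h ↦ ha ?_
  rw [← Pi.single_eq_same (M := E) k a, ← evalCLM_single (𝕜 := 𝕜) (p := p), h, zero_apply]

end Eval

section Duality

variable {ι 𝕜 : Type*} [RCLike 𝕜] {p q : ℝ≥0∞} [Fact (1 ≤ p)] [Fact (1 ≤ q)]
  [q.HolderConjugate p]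

variable (p q) in
/-- The canonical map `ℓ^q → (ℓ^p)*` for conjugate exponents, sending `φ` to the functional
`v ↦ ∑' i, φ i * v i` (bilinear, without conjugation). For `p = 1` and `q = ∞` it is the
identification of the dual of `ℓ¹` with `ℓ^∞`. -/
noncomputable def lpToDual : ℓ^q(ι, 𝕜) →L[𝕜] StrongDual 𝕜 ℓ^p(ι, 𝕜) :=
  lp.dualPairing q p (fun _ ↦ ContinuousLinearMap.mul 𝕜 𝕜) (K := 1)
    fun _ ↦ ContinuousLinearMap.opNorm_mul_le 𝕜 𝕜

lemma lpToDual_apply (φ : ℓ^q(ι, 𝕜)) (v : ℓ^p(ι, 𝕜)) :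
    lpToDual p q φ v = ∑' i, φ i * v i :=
  rfl

lemma lpToDual_single [DecidableEq ι] (φ : ℓ^q(ι, 𝕜)) (i : ι) (a : 𝕜) :
    lpToDual p q φ (lp.single p i a) = φ i * a := by
  rw [lpToDual_apply, tsum_eq_single i fun j hj ↦ mul_eq_zero_of_right _
    (lp.single_apply_ne (E := fun _ ↦ 𝕜) p i a hj), lp.single_apply_self]

end Duality

lemma memℓp_infty_inv_of_le_norm {ι 𝕜 : Type*} [NormedField 𝕜] {c : ι → 𝕜} {δ : ℝ} (hδ : 0 < δ)
    (hc : ∀ i, δ ≤ ‖c i‖) : Memℓp c⁻¹ ∞ := by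
  refine memℓp_infty ⟨δ⁻¹, ?_⟩
  rintro _ ⟨i, rfl⟩
  simpa only [Pi.inv_apply, norm_inv] using inv_anti₀ hδ (hc i)

theorem stmt_12_general {ι 𝕜 : Type*} [DecidableEq ι] [RCLike 𝕜] {p q : ℝ≥0∞} [Fact (1 ≤ p)]
    [Fact (1 ≤ q)] [q.HolderConjugate p] (hp : p ≠ ∞) {c : ι → 𝕜} (hc : ∀ i, c i ≠ 0)
    (hcq : Memℓp c⁻¹ q) :
    (∀ f : ℓ^p(ι, 𝕜) →L[𝕜] 𝕜, (∀ i, f (c i • lp.single p i 1) = 0) → f = 0) ∧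
    (∃ Ψ : ℓ^p(ι, 𝕜) →L[𝕜] 𝕜, (∀ v : ℓ^p(ι, 𝕜), Ψ v = ∑' i, v i / c i) ∧
      ∀ i, Ψ (c i • lp.single p i 1) = 1) ∧
    (∀ k, ∃ f : ℓ^p(ι, 𝕜) →L[𝕜] 𝕜, f ≠ 0 ∧ (∀ v : ℓ^p(ι, 𝕜), f v = v k) ∧
      ∀ i, i ≠ k → f (c i • lp.single p i 1) = 0) := by
  refine ⟨fun f ↦ eq_zero_of_map_smul_single_eq_zero hp hc,
    ⟨lpToDual p q ⟨fun i ↦ (c i)⁻¹, hcq⟩, fun v ↦ ?_, fun i ↦ ?_⟩,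
    fun k ↦ ⟨lp.evalCLM 𝕜 _ p k, evalCLM_ne_zero k, fun _ ↦ rfl, fun i hik ↦ ?_⟩⟩
  · simp only [lpToDual_apply, div_eq_inv_mul]
  · rw [map_smul, lpToDual_single, mul_one, smul_eq_mul]
    exact mul_inv_cancel₀ (hc i)
  · rw [map_smul, evalCLM_single, Pi.single_eq_of_ne hik.symm, smul_zero]

/-- **Remark 3.2 (type P part).** In `E = ℓ¹(ℕ)` (indexed from `0`), the family
`{(n+1) • e n}` is total over `(ℓ¹)*` (every `f ∈ (ℓ¹)*` annihilating every
`(n+1) • e n` is zero); the functional `Ψ ∈ (ℓ¹)*` given by the bounded sequence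
`(1/(n+1))ₙ ∈ ℓ∞`, i.e. `Ψ v = ∑' k, v k / (k+1)`, satisfies `Ψ ((n+1) • e n) = 1`
for every `n`; and for every `k` there is a nonzero `f ∈ (ℓ¹)*` (the `k`-th
coordinate functional) with `f ((n+1) • e n) = 0` for all `n ≠ k`, so removing any
element of the family destroys totality. -/
theorem stmt_12 :
    (∀ f : lp (fun _ : ℕ => ℝ) 1 →L[ℝ] ℝ,
      (∀ n : ℕ, f (((n : ℝ) + 1) • e n) = 0) → f = 0) ∧
    (∃ Ψ : lp (fun _ : ℕ => ℝ) 1 →L[ℝ] ℝ,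
      (∀ v : lp (fun _ : ℕ => ℝ) 1, Ψ v = ∑' k : ℕ, v k / ((k : ℝ) + 1)) ∧
      ∀ n : ℕ, Ψ (((n : ℝ) + 1) • e n) = 1) ∧
    (∀ k : ℕ, ∃ f : lp (fun _ : ℕ => ℝ) 1 →L[ℝ] ℝ,
      f ≠ 0 ∧ (∀ v : lp (fun _ : ℕ => ℝ) 1, f v = v k) ∧
      ∀ n : ℕ, n ≠ k → f (((n : ℝ) + 1) • e n) = 0) := by
  have one_le_norm (n : ℕ) : 1 ≤ ‖(n : ℝ) + 1‖ :=
    (le_add_of_nonneg_left n.cast_nonneg).trans (le_abs_self _)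
  exact stmt_12_general ENNReal.one_ne_top Nat.cast_add_one_ne_zero
    (memℓp_infty_inv_of_le_norm one_pos one_le_norm)
end
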